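/- arXiv:2605.09592 — 2 statements merged into one kernel-verified Lean document; each statement's English description precedes it below -/
import Mathlib

section
/- If x and y are real numbers with 2 ≤ y ≤ x and x ≥ 4, then ψ(x, y) ≥ x^(1 − (log log x)/(log y)). -/
section SmoothAux

open Finset

/-- The finset of `y`-smooth positive integers up to `x`. -/
noncomputable def smoothSet (x y : ℝ) : Finset ℕ := by
  classical
  exact (Finset.Icc 1 ⌊x⌋₊).filter (fun n => ∀ p : ℕ, p.Prime → p ∣ n → (p : ℝ) ≤ y)

lemma mem_smoothSet {x y : ℝ} (hx : 0 ≤ x) {n : ℕ} :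
    n ∈ smoothSet x y ↔ 1 ≤ n ∧ (n : ℝ) ≤ x ∧ ∀ p : ℕ, p.Prime → p ∣ n → (p : ℝ) ≤ y := by
  classical
  simp only [smoothSet, mem_filter, mem_Icc, Nat.le_floor_iff hx, and_assoc]

lemma ncard_eq {x y : ℝ} (hx : 0 ≤ x) :
    {n : ℕ | 1 ≤ n ∧ (n : ℝ) ≤ x ∧ ∀ p : ℕ, p.Prime → p ∣ n → (p : ℝ) ≤ y}.ncard
      = (smoothSet x y).card := by
  rw [← Set.ncard_coe_finset]
  congr 1
  ext n
  simp [mem_smoothSet hx]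

lemma small_mem {x y : ℝ} (hx : 0 ≤ x) {n : ℕ} (h1 : 1 ≤ n) (hnx : (n : ℝ) ≤ x)
    (hny : (n : ℝ) ≤ y) : n ∈ smoothSet x y := by
  rw [mem_smoothSet hx]
  refine ⟨h1, hnx, fun p _ hd => ?_⟩
  have : p ≤ n := Nat.le_of_dvd h1 hd
  have : (p : ℝ) ≤ n := by exact_mod_cast this
  linarith

/-- Key inequality. -/
lemma key {x y : ℝ} (hx : 1 ≤ x) :
    ∑ m ∈ smoothSet x y, Chebyshev.psi (min y (x / m)) ≤ (smoothSet x y).card * Real.log x := by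
  have hx0 : 0 ≤ x := by linarith
  have h1 : ∑ n ∈ smoothSet x y, Real.log n ≤ (smoothSet x y).card * Real.log x := by
    rw [← nsmul_eq_mul]
    apply Finset.sum_le_card_nsmul
    intro n hn
    rw [mem_smoothSet hx0] at hn
    apply Real.log_le_log
    · exact_mod_cast hn.1
    · exact hn.2.1
  refine le_trans ?_ h1
  have h2 : ∀ n ∈ smoothSet x y, Real.log n = ∑ d ∈ n.divisors, ArithmeticFunction.vonMangoldt d :=
    fun n _ => ArithmeticFunction.vonMangoldt_sum.symm
  rw [Finset.sum_congr rfl h2]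
  unfold Chebyshev.psi
  rw [Finset.sum_sigma', Finset.sum_sigma']
  have hinj : Set.InjOn (fun a : (Σ _ : ℕ, ℕ) => (⟨a.1 * a.2, a.2⟩ : Σ _ : ℕ, ℕ))
      ((smoothSet x y).sigma (fun m => Finset.Ioc 0 ⌊min y (x / m)⌋₊)) := by
    rintro ⟨a, b⟩ hab ⟨c, d⟩ hcd h
    simp only [coe_sigma, Set.mem_sigma_iff, coe_Ioc, Set.mem_Ioc] at hab hcd
    simp only [Sigma.mk.injEq, heq_eq_eq] at h
    obtain ⟨h3, h4⟩ := h
    subst h4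
    have := Nat.eq_of_mul_eq_mul_right hab.2.1 h3
    simp [this]
  rw [← Finset.sum_image (f := fun a : (Σ _ : ℕ, ℕ) => ArithmeticFunction.vonMangoldt a.2) hinj]
  apply Finset.sum_le_sum_of_subset_of_nonneg
  · intro a ha
    rw [mem_image] at ha
    obtain ⟨⟨m, d⟩, h, rfl⟩ := ha
    simp only [mem_sigma, mem_Ioc] at h
    obtain ⟨hm, hd0, hd⟩ := h
    have hd' := (Nat.le_floor_iff' hd0.ne').1 hd
    rw [mem_smoothSet hx0] at hm
    have hm0 : (0 : ℝ) < m := by exact_mod_cast hm.1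
    simp only [mem_sigma, Nat.mem_divisors]
    have hdx : (d : ℝ) ≤ x / m := hd'.trans (min_le_right _ _)
    have hdy : (d : ℝ) ≤ y := hd'.trans (min_le_left _ _)
    refine ⟨?_, Dvd.intro_left m rfl, Nat.mul_ne_zero (by omega) (by omega)⟩
    rw [mem_smoothSet hx0]
    refine ⟨Nat.mul_pos hm.1 hd0, ?_, ?_⟩
    · rw [le_div_iff₀ hm0] at hdx
      push_cast; linarith
    · intro p hp hpd
      rcases (Nat.Prime.dvd_mul hp).1 hpd with h | h
      · exact hm.2.2 p hp h
      · have : p ≤ d := Nat.le_of_dvd hd0 h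
        have : (p : ℝ) ≤ d := by exact_mod_cast this
        linarith
  · intro a _ _
    exact ArithmeticFunction.vonMangoldt_nonneg

lemma le_log_of_pow {q a : ℝ} (k r : ℕ) (hk : 0 < k) (hq : q = r / k)
    (h : (2.7182818286 : ℝ) ^ r ≤ a ^ k) : q ≤ Real.log a := by
  have hk' : (0 : ℝ) < k := by exact_mod_cast hk
  have h1 : Real.exp 1 ^ r ≤ a ^ k :=
    (pow_le_pow_left₀ (Real.exp_pos 1).le Real.exp_one_lt_d9.le r).trans h
  have h2 := Real.log_le_log (by positivity) h1
  rw [Real.log_pow, Real.log_pow, Real.log_exp] at h2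
  rw [hq, div_le_iff₀ hk']
  linarith

lemma psi_nat_large (N : ℕ) (hN : 20 ≤ N) : ((N : ℝ) + 1) / 2 ≤ Chebyshev.psi N := by
  rw [Chebyshev.psi_eq_log_lcmUpto]
  have h := Chebyshev.two_pow_le_mul_lcmUpto N
  have h' : (2 : ℝ) ^ N ≤ (N + 1) * Nat.lcmUpto N := by exact_mod_cast h
  have hp : (0 : ℝ) < Nat.lcmUpto N := by exact_mod_cast Nat.lcmUpto_pos N
  have hl := Real.log_le_log (by positivity) h'
  rw [Real.log_pow, Real.log_mul (by positivity) hp.ne'] at hl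
  have h2 := Real.log_two_gt_d9
  have hN' : (20 : ℝ) ≤ N := by exact_mod_cast hN
  have h3 : Real.log ((N : ℝ) + 1) ≤ Real.log 21 + ((N : ℝ) + 1) / 21 - 1 := by
    have := Real.log_le_sub_one_of_pos (x := ((N : ℝ) + 1) / 21) (by positivity)
    rw [Real.log_div (by positivity) (by norm_num)] at this
    linarith
  have h4 : Real.log 21 ≤ 3.1 := by
    rw [Real.log_le_iff_le_exp (by norm_num)]
    have h5 : Real.exp 3.1 = Real.exp 1 ^ 3 * Real.exp 0.1 := by
      rw [← Real.exp_nat_mul, ← Real.exp_add]; norm_num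
    rw [h5]
    have h6 := Real.exp_one_gt_d9
    have h7 := Real.add_one_le_exp (0.1 : ℝ)
    calc (21 : ℝ) ≤ 2.7182818283 ^ 3 * (0.1 + 1) := by norm_num
      _ ≤ _ := by gcongr
  nlinarith

lemma lcmUpto_step (n : ℕ) : Nat.lcmUpto (n + 1) = Nat.lcm (n + 1) (Nat.lcmUpto n) := by
  unfold Nat.lcmUpto
  rw [← Finset.insert_Icc_right_eq_Icc_add_one (by omega), Finset.lcm_insert]
  rfl

lemma lcmUpto_zero' : Nat.lcmUpto 0 = 1 := by simp [Nat.lcmUpto]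

lemma psi_nat_small (N : ℕ) (hN : 4 ≤ N) : 0.49 * ((N : ℝ) + 1) ≤ Chebyshev.psi N := by
  have hN0 : (0 : ℝ) ≤ N := by positivity
  rcases le_or_gt 20 N with h | h
  · have := psi_nat_large N h
    linarith
  rw [Chebyshev.psi_eq_log_lcmUpto]
  have hp : (0 : ℝ) < Nat.lcmUpto N := by exact_mod_cast Nat.lcmUpto_pos N
  rcases eq_or_lt_of_le hN with h4 | h4
  · subst h4
    apply le_log_of_pow 20 49 (by norm_num)
    · norm_num
    · rw [show Nat.lcmUpto 4 = 12 by norm_num [lcmUpto_step, lcmUpto_zero']]; norm_num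
  have : ((N : ℝ) + 1) / 2 ≤ Real.log (Nat.lcmUpto N) := by
    apply le_log_of_pow 2 (N + 1) (by norm_num)
    · push_cast; ring
    · interval_cases N
      · rw [show Nat.lcmUpto 5 = 60 by norm_num [lcmUpto_step, lcmUpto_zero']]; norm_num
      · rw [show Nat.lcmUpto 6 = 60 by norm_num [lcmUpto_step, lcmUpto_zero']]; norm_num
      · rw [show Nat.lcmUpto 7 = 420 by norm_num [lcmUpto_step, lcmUpto_zero']]; norm_num
      · rw [show Nat.lcmUpto 8 = 840 by norm_num [lcmUpto_step, lcmUpto_zero']]; norm_num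
      · rw [show Nat.lcmUpto 9 = 2520 by norm_num [lcmUpto_step, lcmUpto_zero']]; norm_num
      · rw [show Nat.lcmUpto 10 = 2520 by norm_num [lcmUpto_step, lcmUpto_zero']]; norm_num
      · rw [show Nat.lcmUpto 11 = 27720 by norm_num [lcmUpto_step, lcmUpto_zero']]; norm_num
      · rw [show Nat.lcmUpto 12 = 27720 by norm_num [lcmUpto_step, lcmUpto_zero']]; norm_num
      · rw [show Nat.lcmUpto 13 = 360360 by norm_num [lcmUpto_step, lcmUpto_zero']]; norm_num
      · rw [show Nat.lcmUpto 14 = 360360 by norm_num [lcmUpto_step, lcmUpto_zero']]; norm_num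
      · rw [show Nat.lcmUpto 15 = 360360 by norm_num [lcmUpto_step, lcmUpto_zero']]; norm_num
      · rw [show Nat.lcmUpto 16 = 720720 by norm_num [lcmUpto_step, lcmUpto_zero']]; norm_num
      · rw [show Nat.lcmUpto 17 = 12252240 by norm_num [lcmUpto_step, lcmUpto_zero']]; norm_num
      · rw [show Nat.lcmUpto 18 = 12252240 by norm_num [lcmUpto_step, lcmUpto_zero']]; norm_num
      · rw [show Nat.lcmUpto 19 = 232792560 by norm_num [lcmUpto_step, lcmUpto_zero']]; norm_num
  linarith

lemma psi_half {t : ℝ} (ht : 20 ≤ t) : t / 2 ≤ Chebyshev.psi t := by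
  rw [Chebyshev.psi_eq_psi_coe_floor]
  have := psi_nat_large ⌊t⌋₊ (Nat.le_floor (by exact_mod_cast ht))
  have := Nat.lt_floor_add_one t
  linarith

lemma psi_49 {t : ℝ} (ht : 4 ≤ t) : 0.49 * t ≤ Chebyshev.psi t := by
  rw [Chebyshev.psi_eq_psi_coe_floor]
  have := psi_nat_small ⌊t⌋₊ (Nat.le_floor (by exact_mod_cast ht))
  have := Nat.lt_floor_add_one t
  linarith

lemma harm (a b : ℕ) (hab : a ≤ b) :
    Real.log (((b : ℝ) + 1) / ((a : ℝ) + 1)) ≤ ∑ m ∈ Finset.Ioc a b, (1 : ℝ) / m := by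
  induction b, hab using Nat.le_induction with
  | base => simp [div_self (show (a : ℝ) + 1 ≠ 0 by positivity)]
  | succ b hab ih =>
    rw [Finset.sum_Ioc_succ_top (by omega)]
    have h := Real.log_le_sub_one_of_pos (x := ((b : ℝ) + 1 + 1) / (b + 1)) (by positivity)
    have e : ((b : ℝ) + 1 + 1) / (b + 1) - 1 = 1 / (b + 1) := by field_simp; ring
    have e2 : ((b : ℝ) + 1 + 1) / (a + 1)
      = ((b : ℝ) + 1) / (a + 1) * (((b : ℝ) + 1 + 1) / (b + 1)) := by field_simp
    push_cast
    rw [e2, Real.log_mul (by positivity) (by positivity)]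
    linarith

/-- reduction step -/
lemma step_card {x y : ℝ} (hy : 20 ≤ y) (hyx : y ≤ x) :
    y / 2 * (smoothSet (x / y) y).card ≤ (smoothSet x y).card * Real.log x := by
  have hx0 : 0 ≤ x := by linarith
  refine le_trans ?_ (key (y := y) (by linarith))
  have hxy : 0 ≤ x / y := by positivity
  have hsub : smoothSet (x / y) y ⊆ smoothSet x y := by
    intro n hn
    rw [mem_smoothSet hxy] at hn
    rw [mem_smoothSet hx0]
    exact ⟨hn.1, hn.2.1.trans (div_le_self hx0 (by linarith)), hn.2.2⟩
  refine le_trans ?_ (Finset.sum_le_sum_of_subset_of_nonneg hsub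
    (fun _ _ _ => Chebyshev.psi_nonneg _))
  rw [mul_comm, ← nsmul_eq_mul]
  apply Finset.card_nsmul_le_sum
  intro m hm
  rw [mem_smoothSet hxy] at hm
  have hm0 : (0 : ℝ) < m := by exact_mod_cast hm.1
  have : y ≤ x / m := by
    have := hm.2.1
    rw [le_div_iff₀ (by linarith)] at this
    rw [le_div_iff₀ hm0]; linarith
  rw [min_eq_left this]
  exact psi_half hy

lemma base_card {x y : ℝ} (hy : 20 ≤ y) (hz4 : 4 ≤ x / y) (hzy : x / y ≤ y) :
    0.49 * (y * ⌊x / y⌋₊ + x * ∑ m ∈ Finset.Ioc ⌊x / y⌋₊ ⌊y⌋₊, (1 : ℝ) / m)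
      ≤ (smoothSet x y).card * Real.log x := by
  have hyx : y ≤ x := by
    rw [le_div_iff₀ (by linarith)] at hz4; linarith
  have hx0 : 0 ≤ x := by linarith
  refine le_trans ?_ (key (y := y) (by linarith))
  have hsub : Finset.Ioc 0 ⌊y⌋₊ ⊆ smoothSet x y := by
    intro n hn
    rw [mem_Ioc, Nat.le_floor_iff (by linarith)] at hn
    exact small_mem hx0 hn.1 (by linarith [hn.2]) hn.2
  refine le_trans ?_ (Finset.sum_le_sum_of_subset_of_nonneg hsub
    (fun _ _ _ => Chebyshev.psi_nonneg _))
  have hle : ⌊x / y⌋₊ ≤ ⌊y⌋₊ := Nat.floor_le_floor hzy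
  rw [← Finset.sum_Ioc_consecutive _ (Nat.zero_le _) hle, mul_add]
  apply add_le_add
  · have : ∀ m ∈ Finset.Ioc 0 ⌊x / y⌋₊, 0.49 * y ≤ Chebyshev.psi (min y (x / m)) := by
      intro m hm
      rw [mem_Ioc, Nat.le_floor_iff (by linarith)] at hm
      have hm0 : (0 : ℝ) < m := by exact_mod_cast hm.1
      have : y ≤ x / m := by
        have := hm.2
        rw [le_div_iff₀ (by linarith)] at this
        rw [le_div_iff₀ hm0]; linarith
      rw [min_eq_left this]
      exact psi_49 (by linarith)
    have := Finset.card_nsmul_le_sum _ _ _ this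
    rw [nsmul_eq_mul, Nat.card_Ioc] at this
    simp only [Nat.sub_zero] at this
    linarith
  · rw [← mul_assoc, Finset.mul_sum]
    apply Finset.sum_le_sum
    intro m hm
    rw [mem_Ioc] at hm
    have hm0 : (0 : ℝ) < m := by exact_mod_cast (by omega : 0 < m)
    have h1 : x / y < m := (Nat.floor_lt (by linarith)).1 hm.1
    have h2 : (m : ℝ) ≤ y := (Nat.le_floor_iff (by linarith)).1 hm.2
    have h3 : x / m ≤ y := by
      rw [div_lt_iff₀ (by linarith)] at h1
      rw [div_le_iff₀ hm0]; linarith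
    have h4 : x / y ≤ x / m := by gcongr
    rw [min_eq_right h3]
    have := psi_49 (hz4.trans h4)
    calc _ = 0.49 * (x / m) := by ring
      _ ≤ _ := this

lemma log_le_div_e {s : ℝ} (hs : 0 < s) : Real.log s ≤ s / Real.exp 1 := by
  have h := Real.log_le_sub_one_of_pos (x := s / Real.exp 1) (by positivity)
  rw [Real.log_div hs.ne' (Real.exp_pos 1).ne', Real.log_exp] at h
  linarith

/-- For small `y` the trivial count suffices. -/
lemma trivial_bound {x y : ℝ} (hy : 2 ≤ y) (hx : 4 ≤ x) (N : ℕ) (hN : 1 ≤ N)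
    (hcard : N ≤ (smoothSet x y).card) (h : y ≤ 2.718 * Real.log y * Real.log N) :
    Real.exp (Real.log x * (1 - Real.log (Real.log x) / Real.log y)) ≤ (smoothSet x y).card := by
  have hN' : (0 : ℝ) < N := by exact_mod_cast hN
  refine le_trans ?_ (Nat.cast_le.2 hcard)
  rw [← Real.le_log_iff_exp_le hN']
  have hL : 0 < Real.log x := Real.log_pos (by linarith)
  have hl : 0 < Real.log y := Real.log_pos (by linarith)
  have hNl : 0 ≤ Real.log N := Real.log_natCast_nonneg N
  set L := Real.log x
  have h1 := log_le_div_e (s := y / L) (by positivity)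
  rw [Real.log_div (by linarith) hL.ne'] at h1
  have h2 : L * (Real.log y - Real.log L) ≤ y / Real.exp 1 := by
    calc _ ≤ L * (y / L / Real.exp 1) := by gcongr
      _ = _ := by field_simp
  have h3 : y / Real.exp 1 ≤ Real.log y * Real.log N := by
    rw [div_le_iff₀ (Real.exp_pos 1)]
    have := Real.exp_one_gt_d9
    have h5 : 0 ≤ Real.log y * Real.log N := by positivity
    nlinarith
  calc L * (1 - Real.log L / Real.log y) = L * (Real.log y - Real.log L) / Real.log y := by
        field_simp
    _ ≤ Real.log y * Real.log N / Real.log y := div_le_div_of_nonneg_right (by linarith) hl.le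
    _ = _ := by field_simp

lemma card_ge {x y : ℝ} (hx : 0 ≤ x) (N : ℕ) (h1 : (N : ℝ) ≤ x) (h2 : (N : ℝ) ≤ y) :
    N ≤ (smoothSet x y).card := by
  have hsub : Finset.Icc 1 N ⊆ smoothSet x y := by
    intro n hn
    rw [mem_Icc] at hn
    have : (n : ℝ) ≤ N := by exact_mod_cast hn.2
    exact small_mem hx hn.1 (by linarith) (by linarith)
  simpa using Finset.card_le_card hsub

lemma four_mem {x y : ℝ} (hy : 2 ≤ y) (hx : 4 ≤ x) : 4 ∈ smoothSet x y := by
  rw [mem_smoothSet (by linarith)]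
  refine ⟨by norm_num, by exact_mod_cast hx, fun p hp hd => ?_⟩
  have h2 : p ∣ 2 := hp.dvd_of_dvd_pow (show p ∣ 2 ^ 2 by simpa using hd)
  have : p ≤ 2 := Nat.le_of_dvd (by norm_num) h2
  have : (p : ℝ) ≤ 2 := by exact_mod_cast this
  linarith

lemma interval_case {x y a b q : ℝ} (N : ℕ) (ha2 : 2 ≤ a) (hay : a ≤ y) (hyb : y ≤ b)
    (hyx : y ≤ x) (hx : 4 ≤ x) (haN : a = N) (hq0 : 0 ≤ q) (hq : q ≤ Real.log a)
    (hb : b ≤ 2.718 * q * q) :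
    Real.exp (Real.log x * (1 - Real.log (Real.log x) / Real.log y)) ≤ (smoothSet x y).card := by
  have hN1 : 1 ≤ N := by
    have : (1 : ℝ) ≤ N := by linarith
    exact_mod_cast this
  apply trivial_bound (by linarith) hx N hN1 (card_ge (by linarith) N (by linarith) (by linarith))
  have h1 : q ≤ Real.log N := haN ▸ hq
  have h2 : q ≤ Real.log y := hq.trans (Real.log_le_log (by linarith) hay)
  have h3 : q * q ≤ Real.log y * Real.log N := mul_le_mul h2 h1 hq0 (hq0.trans h2)
  linarith

lemma small_case {x y : ℝ} (hy : 2 ≤ y) (hyx : y ≤ x) (hx : 4 ≤ x) (hy2 : y ≤ 20.1) :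
    Real.exp (Real.log x * (1 - Real.log (Real.log x) / Real.log y)) ≤ (smoothSet x y).card := by
  have hl2 := Real.log_two_gt_d9
  have hl3 := Real.log_three_gt_d9
  have hl4 : Real.log 4 = 2 * Real.log 2 := by
    rw [show (4 : ℝ) = 2 ^ 2 by norm_num, Real.log_pow]; norm_num
  rcases le_or_gt y 3 with h | h
  · have hc : 3 ≤ (smoothSet x y).card := by
      have hsub : ({1, 2, 4} : Finset ℕ) ⊆ smoothSet x y := by
        intro n hn
        simp only [mem_insert, mem_singleton] at hn
        rcases hn with rfl | rfl | rfl
        · exact small_mem (by linarith) (by norm_num) (by norm_num; linarith)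
            (by norm_num; linarith)
        · exact small_mem (by linarith) (by norm_num) (by norm_num; linarith)
            (by norm_num; linarith)
        · exact four_mem hy hx
      simpa using Finset.card_le_card hsub
    apply trivial_bound hy hx 3 (by norm_num) hc
    have h1 := Real.one_sub_inv_le_log_of_pos (x := y / 2) (by positivity)
    rw [Real.log_div (by linarith) (by norm_num)] at h1
    have h2 : 0.6931 + 1 - 2 / y ≤ Real.log y := by
      rw [inv_div] at h1; linarith
    have h3 : y ≤ 2.9858 * (0.6931 + 1 - 2 / y) := by
      have hy0 : 0 < y := by linarith
      have : 2.9858 * (0.6931 + 1 - 2 / y) - y = (2.9858 * (1.6931 * y - 2) - y ^ 2) / y := by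
        field_simp; ring
      have h4 : 0 ≤ (2.9858 * (1.6931 * y - 2) - y ^ 2) / y := by
        apply div_nonneg _ hy0.le
        nlinarith
      linarith
    have h5 : 0 ≤ Real.log y := Real.log_nonneg (by linarith)
    push_cast
    nlinarith
  rcases le_or_gt y 4 with h4 | h4
  · have hc : 4 ≤ (smoothSet x y).card := by
      have hsub : ({1, 2, 3, 4} : Finset ℕ) ⊆ smoothSet x y := by
        intro n hn
        simp only [mem_insert, mem_singleton] at hn
        rcases hn with rfl | rfl | rfl | rfl
        · exact small_mem (by linarith) (by norm_num) (by norm_num; linarith)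
            (by norm_num; linarith)
        · exact small_mem (by linarith) (by norm_num) (by norm_num; linarith)
            (by norm_num; linarith)
        · exact small_mem (by linarith) (by norm_num) (by norm_num; linarith)
            (by norm_num; linarith)
        · exact four_mem hy hx
      simpa using Finset.card_le_card hsub
    apply trivial_bound hy hx 4 (by norm_num) hc
    have h2 : Real.log 3 ≤ Real.log y := Real.log_le_log (by norm_num) h.le
    push_cast
    rw [hl4]
    nlinarith
  rcases le_or_gt y 5 with h5 | h5
  · exact interval_case (a := 4) (b := 5) (q := 1.38) 4 (by norm_num) h4.le h5 hyx hx (by norm_num)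
      (by norm_num) (by linarith) (by norm_num)
  rcases le_or_gt y 7 with h6 | h6
  · exact interval_case (a := 5) (b := 7) (q := 1.6094) 5 (by norm_num) h5.le h6 hyx hx (by norm_num)
      (by norm_num) (by linarith [Real.log_five_gt_d9]) (by norm_num)
  rcases le_or_gt y 10 with h7 | h7
  · exact interval_case (a := 7) (b := 10) (q := 1.94) 7 (by norm_num) h6.le h7 hyx hx (by norm_num)
      (by norm_num) (le_log_of_pow 50 97 (by norm_num) (by norm_num) (by norm_num)) (by norm_num)
  rcases le_or_gt y 14 with h8 | h8
  · exact interval_case (a := 10) (b := 14) (q := 2.3) 10 (by norm_num) h7.le h8 hyx hx (by norm_num)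
      (by norm_num) (le_log_of_pow 10 23 (by norm_num) (by norm_num) (by norm_num)) (by norm_num)
  rcases le_or_gt y 18 with h9 | h9
  · exact interval_case (a := 14) (b := 18) (q := 2.6) 14 (by norm_num) h8.le h9 hyx hx (by norm_num)
      (by norm_num) (le_log_of_pow 10 26 (by norm_num) (by norm_num) (by norm_num)) (by norm_num)
  · exact interval_case (a := 18) (b := 20.1) (q := 2.8) 18 (by norm_num) h9.le hy2 hyx hx
      (by norm_num)
      (by norm_num) (le_log_of_pow 10 28 (by norm_num) (by norm_num) (by norm_num)) (by norm_num)

set_option maxHeartbeats 2000000 in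
/-- The range `y ≤ x ≤ y²`. -/
lemma base_case {x y : ℝ} (hy : 20.1 ≤ y) (hyx : y ≤ x) (hxy : x ≤ y * y) :
    Real.exp (Real.log x * (1 - Real.log (Real.log x) / Real.log y)) ≤ (smoothSet x y).card := by
  have hy0 : 0 < y := by linarith
  have hx0 : 0 < x := by linarith
  have hl : 3 ≤ Real.log y :=
    (le_log_of_pow 1 3 (by norm_num) (by norm_num) (by norm_num) : (3 : ℝ) ≤ Real.log 20.1).trans
      (Real.log_le_log (by norm_num) hy)
  have hz1 : 1 ≤ x / y := by rw [le_div_iff₀ hy0]; linarith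
  have hzy : x / y ≤ y := by rw [div_le_iff₀ hy0]; linarith
  have hxz : Real.log x = Real.log y + Real.log (x / y) := by
    rw [Real.log_div hx0.ne' hy0.ne']; ring
  have hlz0 : 0 ≤ Real.log (x / y) := Real.log_nonneg hz1
  have hlzy : Real.log (x / y) ≤ Real.log y := Real.log_le_log (by linarith) hzy
  have hxe : x = y * (x / y) := by field_simp
  set z := x / y with hz
  set l := Real.log y with hldef
  set a := Real.log z with hadef
  set L := Real.log x with hLdef
  set θ := a / l with hθ
  have hl0 : 0 < l := by linarith
  have haθ : a = θ * l := by rw [hθ]; field_simp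
  have hθ0 : 0 ≤ θ := by positivity
  have hθ1 : θ ≤ 1 := by rw [hθ, div_le_one hl0]; exact hlzy
  have hL3 : 3 ≤ L := by linarith
  have hL0 : 0 < L := by linarith
  have hlogL : 1 ≤ Real.log L :=
    (le_log_of_pow 1 1 (by norm_num) (by norm_num) (by norm_num) : (1 : ℝ) ≤ Real.log 3).trans
      (Real.log_le_log (by norm_num) hL3)
  have htarget : Real.exp (L * (1 - Real.log L / l)) = x / L * Real.exp (-(θ * Real.log L)) := by
    have e1 : L * (1 - Real.log L / l) = L + (-Real.log L) + (-(θ * Real.log L)) := by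
      have : L = l * (1 + θ) := by rw [hxz, haθ]; ring
      calc L * (1 - Real.log L / l) = L - L / l * Real.log L := by ring
        _ = L - (1 + θ) * Real.log L := by
          congr 2
          rw [div_eq_iff hl0.ne']; linarith
        _ = _ := by ring
    rw [e1, Real.exp_add, Real.exp_add, Real.exp_neg, Real.exp_log hL0, hLdef, Real.exp_log hx0]
    rfl
  rw [htarget]
  set W := θ * Real.log L with hW
  have hW0 : 0 ≤ W := by positivity
  rcases le_or_gt z 4 with hz4 | hz4
  · have hc := card_ge hx0.le ⌊y⌋₊ ((Nat.floor_le hy0.le).trans hyx) (Nat.floor_le hy0.le)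
    have hc' : (⌊y⌋₊ : ℝ) ≤ (smoothSet x y).card := by exact_mod_cast hc
    have hfl := Nat.lt_floor_add_one y
    refine le_trans ?_ hc'
    have he : Real.exp (-W) ≤ 1 := Real.exp_le_one_iff.2 (by linarith)
    have h1 : x / L * Real.exp (-W) ≤ x / L := mul_le_of_le_one_right (by positivity) he
    have hza : 1.386 + 1 - 4 / z ≤ a := by
      have h2 := Real.one_sub_inv_le_log_of_pos (x := z / 4) (by positivity)
      rw [Real.log_div (by linarith) (by norm_num), inv_div,
        show (4 : ℝ) = 2 ^ 2 by norm_num, Real.log_pow] at h2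
      have := Real.log_two_gt_d9
      norm_num at h2
      linarith
    have h3 : z ≤ 0.95 * L := by
      have h4 : 0.95 * (5.386 - 4 / z) - z = (0.95 * (5.386 * z - 4) - z ^ 2) / z := by
        field_simp
      have h5 : 0 ≤ (0.95 * (5.386 * z - 4) - z ^ 2) / z := by
        apply div_nonneg _ (by linarith)
        nlinarith
      linarith
    have h6 : x / L ≤ 0.95 * y := by
      rw [div_le_iff₀ hL0, hxe]
      nlinarith
    linarith
  · have hb := base_card (x := x) (y := y) (by linarith) hz4.le hzy
    rw [← hz] at hb
    have hf4 : (4 : ℝ) ≤ ⌊z⌋₊ := by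
      exact_mod_cast Nat.le_floor (by exact_mod_cast hz4.le)
    have hfz := Nat.lt_floor_add_one z
    have hfy := Nat.lt_floor_add_one y
    have hf8 : 0.8 * z ≤ ⌊z⌋₊ := by linarith
    have hfz' := Nat.floor_le (show 0 ≤ z by linarith)
    set T := ∑ m ∈ Finset.Ioc ⌊z⌋₊ ⌊y⌋₊, (1 : ℝ) / m with hT
    have hT0 : 0 ≤ T := Finset.sum_nonneg (fun _ _ => by positivity)
    have hT1 : l - a - 0.25 ≤ T := by
      refine le_trans ?_ (harm ⌊z⌋₊ ⌊y⌋₊ (Nat.floor_le_floor hzy))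
      rw [Real.log_div (by positivity) (by positivity)]
      have e1 : l ≤ Real.log (⌊y⌋₊ + 1) := Real.log_le_log hy0 hfy.le
      have e2 : Real.log (⌊z⌋₊ + 1) ≤ Real.log (z * 1.25) :=
        Real.log_le_log (by positivity) (by linarith)
      rw [Real.log_mul (by linarith) (by norm_num)] at e2
      have e3 := Real.log_le_sub_one_of_pos (x := (1.25 : ℝ)) (by norm_num)
      linarith
    have hy8 : 0.8 * x ≤ y * ⌊z⌋₊ := by
      rw [hxe]; nlinarith
    suffices hs : Real.exp (-W) ≤ 0.49 * (0.8 + T) by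
      rw [div_mul_eq_mul_div, div_le_iff₀ hL0]
      refine le_trans ?_ hb
      nlinarith
    rcases le_or_gt 0.62 θ with ht | ht
    · have hL : 4.86 ≤ L := by nlinarith
      have h1 : (1.55 : ℝ) ≤ Real.log L :=
        (le_log_of_pow 20 31 (by norm_num) (by norm_num) (by norm_num) :
          (1.55 : ℝ) ≤ Real.log 4.86).trans (Real.log_le_log (by norm_num) hL)
      have h2 : 0.961 ≤ W := by nlinarith
      have h3 : 2.6 ≤ Real.exp W := by
        have := Real.add_one_le_exp (W - 1)
        have h4 : Real.exp W = Real.exp 1 * Real.exp (W - 1) := by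
          rw [← Real.exp_add]; congr 1; ring
        have := Real.exp_one_gt_d9
        rw [h4]
        nlinarith
      rw [Real.exp_neg]
      have : (Real.exp W)⁻¹ ≤ (2.6 : ℝ)⁻¹ := by gcongr
      norm_num at this ⊢
      linarith
    · have hT2 : 3 * (1 - θ) - 0.25 ≤ T := by nlinarith
      rcases le_or_gt 0.25 θ with ht2 | ht2
      · have h2 : 0.25 ≤ W := by nlinarith
        have h3 : 1.25 ≤ Real.exp W := by linarith [Real.add_one_le_exp W]
        rw [Real.exp_neg]
        have : (Real.exp W)⁻¹ ≤ (1.25 : ℝ)⁻¹ := by gcongr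
        norm_num at this ⊢
        linarith
      · have he : Real.exp (-W) ≤ 1 := Real.exp_le_one_iff.2 (by linarith)
        linarith

lemma bern {v : ℝ} (hv : 1 ≤ v) : Real.log 2 ≤ v * Real.log (1 + 1 / v) := by
  have hv0 : 0 < v := by linarith
  have h := one_add_mul_self_le_rpow_one_add (s := 1 / v)
    (by have : 0 < 1 / v := by positivity
        linarith) hv
  rw [mul_one_div_cancel hv0.ne'] at h
  have h2 := Real.log_le_log (by norm_num) h
  rw [Real.log_rpow (by positivity)] at h2
  norm_num at h2 ⊢
  linarith

lemma large_case {y : ℝ} (hy : 20.1 ≤ y) (k : ℕ) : ∀ x : ℝ, y ≤ x → x ≤ y ^ (k + 2) →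
    Real.exp (Real.log x * (1 - Real.log (Real.log x) / Real.log y)) ≤ (smoothSet x y).card := by
  have hy0 : 0 < y := by linarith
  induction k with
  | zero =>
    intro x h1 h2
    exact base_case hy h1 (by rw [zero_add, pow_two] at h2; exact h2)
  | succ k ih =>
    intro x h1 h2
    rcases le_or_gt x (y * y) with h3 | h3
    · exact base_case hy h1 h3
    have hx0 : 0 < x := by linarith
    have hz1 : y ≤ x / y := by rw [le_div_iff₀ hy0]; linarith
    have hz2 : x / y ≤ y ^ (k + 2) := by
      rw [div_le_iff₀ hy0]
      calc x ≤ y ^ (k + 1 + 2) := h2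
        _ = _ := by ring
    have hI := ih (x / y) hz1 hz2
    have hS := step_card (x := x) (y := y) (by linarith) h1
    have hl : 0 < Real.log y := Real.log_pos (by linarith)
    have hlz : Real.log y ≤ Real.log (x / y) := Real.log_le_log hy0 hz1
    have hxz : Real.log x = Real.log y + Real.log (x / y) := by
      rw [Real.log_div hx0.ne' hy0.ne']; ring
    have hye : Real.exp (Real.log y) = y := Real.exp_log hy0
    set l := Real.log y with hldef
    set M := Real.log (x / y) with hM
    set L := Real.log x with hLdef
    have hM0 : 0 < M := by linarith
    have hL0 : 0 < L := by linarith
    set v := M / l with hv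
    have hv1 : 1 ≤ v := by rw [hv, le_div_iff₀ hl]; linarith
    have hb := bern hv1
    have e1 : 1 + 1 / v = L / M := by rw [hv, hxz]; field_simp; ring
    rw [e1, Real.log_div hL0.ne' hM0.ne'] at hb
    have hmain : L * Real.exp (L * (1 - Real.log L / l))
        ≤ y / 2 * Real.exp (M * (1 - Real.log M / l)) := by
      have t1 : L * Real.exp (L * (1 - Real.log L / l))
          = Real.exp (Real.log L + L * (1 - Real.log L / l)) := by
        rw [Real.exp_add, Real.exp_log hL0]
      have t2 : y / 2 * Real.exp (M * (1 - Real.log M / l))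
          = Real.exp (l - Real.log 2 + M * (1 - Real.log M / l)) := by
        rw [Real.exp_add, Real.exp_sub, hye, Real.exp_log (by norm_num)]
      rw [t1, t2, Real.exp_le_exp]
      have s1 : L * (1 - Real.log L / l) = L - (1 + v) * Real.log L := by
        rw [hv, hxz]; field_simp
      have s2 : M * (1 - Real.log M / l) = M - v * Real.log M := by
        rw [hv]; field_simp
      rw [s1, s2]
      linarith
    have h5 : L * Real.exp (L * (1 - Real.log L / l)) ≤ L * (smoothSet x y).card := by
      calc _ ≤ y / 2 * Real.exp (M * (1 - Real.log M / l)) := hmain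
        _ ≤ y / 2 * (smoothSet (x / y) y).card := by gcongr
        _ ≤ _ := by linarith
    exact le_of_mul_le_mul_left h5 hL0

end SmoothAux


/-- Pomerance's smooth-number bound: if `2 ≤ y ≤ x` and `x ≥ 4`, then the number
`ψ(x, y)` of `y`-smooth positive integers up to `x` satisfies
`ψ(x, y) ≥ x^(1 − (log log x)/(log y))`. -/
theorem smooth_count_lower_bound (x y : ℝ) (hy : 2 ≤ y) (hyx : y ≤ x) (hx : 4 ≤ x) :
    x ^ (1 - Real.log (Real.log x) / Real.log y) ≤
      ({n : ℕ | 1 ≤ n ∧ (n : ℝ) ≤ x ∧ ∀ p : ℕ, p.Prime → p ∣ n → (p : ℝ) ≤ y}.ncard : ℝ) := by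
  rw [ncard_eq (by linarith), Real.rpow_def_of_pos (by linarith)]
  rcases le_or_gt y 20.1 with h | h
  · exact small_case hy hyx hx h
  · obtain ⟨k, hk⟩ := pow_unbounded_of_one_lt x (show 1 < y by linarith)
    refine large_case h.le k x hyx (hk.le.trans ?_)
    exact pow_le_pow_right₀ (by linarith) (by omega)
end

section
/- Let N ≥ 100 be a composite integer and let D be a positive integer with D < N and D > exp(√(2 · log N · log log N)). Let M be a positive integer such that every integer a with 1 ≤ a ≤ ⌈√D⌉ is coprime to N and satisfies a^M ≡ 1 (mod N). Then the smallest prime divisor p of N satisfies p ≤ M · √D. -/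
open ArithmeticFunction in
lemma aux_rec (Y n : ℕ) (_hn : 1 ≤ n) :
    ∑ q ∈ Finset.Icc 1 Y, vonMangoldt q * ((Nat.smoothNumbersUpTo (n / q) (Y + 1)).card : ℝ)
      ≤ ((Nat.smoothNumbersUpTo n (Y + 1)).card : ℝ) * Real.log n := by
  set S := Nat.smoothNumbersUpTo n (Y + 1) with hS
  have hpos : ∀ m ∈ S, m ≠ 0 ∧ m ≤ n := by
    intro m hm
    rw [hS, Nat.mem_smoothNumbersUpTo] at hm
    exact ⟨Nat.ne_zero_of_mem_smoothNumbers hm.2, hm.1⟩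
  have h1 : ∑ m ∈ S, Real.log m ≤ (S.card : ℝ) * Real.log n := by
    rw [← nsmul_eq_mul]
    apply Finset.sum_le_card_nsmul
    intro m hm
    obtain ⟨h0, hle⟩ := hpos m hm
    apply Real.log_le_log
    · exact_mod_cast Nat.pos_of_ne_zero h0
    · exact_mod_cast hle
  refine le_trans ?_ h1
  have h2 : ∀ m ∈ S, ∑ q ∈ Finset.Icc 1 Y, (if q ∣ m then vonMangoldt q else 0) ≤ Real.log m := by
    intro m hm
    obtain ⟨h0, hle⟩ := hpos m hm
    rw [← vonMangoldt_sum, ← Finset.sum_filter]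
    apply Finset.sum_le_sum_of_subset_of_nonneg
    · intro q hq
      simp only [Finset.mem_filter] at hq
      exact Nat.mem_divisors.2 ⟨hq.2, h0⟩
    · intros; exact vonMangoldt_nonneg
  refine le_trans ?_ (Finset.sum_le_sum h2)
  rw [Finset.sum_comm]
  apply Finset.sum_le_sum
  intro q hq
  rw [Finset.mem_Icc] at hq
  rw [← Finset.sum_filter, Finset.sum_const, nsmul_eq_mul, mul_comm]
  apply mul_le_mul_of_nonneg_right _ vonMangoldt_nonneg
  have : (Nat.smoothNumbersUpTo (n / q) (Y + 1)).card ≤ (S.filter (fun m => q ∣ m)).card := by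
    apply Finset.card_le_card_of_injOn (fun k => q * k)
    · intro k hk
      rw [Finset.mem_coe, Nat.mem_smoothNumbersUpTo] at hk
      simp only [Finset.coe_filter, Set.mem_ofPred_eq, hS, Nat.mem_smoothNumbersUpTo]
      refine ⟨⟨?_, ?_⟩, dvd_mul_right _ _⟩
      · exact (Nat.mul_le_mul_left q hk.1).trans (Nat.mul_div_le n q)
      · exact Nat.mul_mem_smoothNumbers (Nat.mem_smoothNumbers_of_lt (by omega) (by omega)) hk.2
    · intro a _ b _ hab
      exact Nat.eq_of_mul_eq_mul_left (by omega) hab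
  exact_mod_cast this

lemma aux_psi (Y : ℝ) (hY : 256 ≤ Y) : 3 / 4 * Y ≤ Chebyshev.psi Y + Chebyshev.psi (Y / 4) := by
  have h1 := Chebyshev.psi_ge' (x := Y) (by linarith)
  have h2 := Chebyshev.psi_ge' (x := Y / 4) (by linarith)
  have h3 : Real.log (Y / 4 + 2) ≤ Real.log (Y + 2) :=
    Real.log_le_log (by linarith) (by linarith)
  have h4 : Real.log (Y + 2) ≤ (Y + 2) / 256 + 8 * Real.log 2 - 1 := by
    have := Real.log_le_sub_one_of_pos (x := (Y + 2) / 256) (by linarith)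
    rw [Real.log_div (by linarith) (by norm_num), show (256 : ℝ) = 2 ^ 8 by norm_num,
      Real.log_pow] at this
    push_cast at this
    norm_num at this ⊢
    linarith
  have h5 := Real.log_two_gt_d9
  have h6 := Real.log_two_lt_d9
  nlinarith

open ArithmeticFunction in
lemma aux_sum (Y : ℕ) (hY : 256 ≤ Y) (α : ℝ) (hα : α ≤ 1 / 2) :
    3 / 4 * (Y : ℝ) ^ α ≤ ∑ q ∈ Finset.Icc 1 Y, vonMangoldt q * (q : ℝ) ^ (α - 1) := by
  have hYr : (256 : ℝ) ≤ Y := by exact_mod_cast hY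
  have hY0 : (0 : ℝ) < Y := by linarith
  have hpt : ∀ q ∈ Finset.Icc 1 Y,
      (vonMangoldt q + if 4 * q ≤ Y then vonMangoldt q else 0) * (Y : ℝ) ^ (α - 1)
        ≤ vonMangoldt q * (q : ℝ) ^ (α - 1) := by
    intro q hq
    rw [Finset.mem_Icc] at hq
    have hq0 : (0 : ℝ) < q := by exact_mod_cast hq.1
    have hL : 0 ≤ vonMangoldt q := vonMangoldt_nonneg
    split_ifs with h4
    · have h4r : (q : ℝ) ≤ Y / 4 := by
        have : (4 * q : ℝ) ≤ Y := by exact_mod_cast h4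
        linarith
      have e1 : ((Y : ℝ) / 4) ^ (α - 1) ≤ (q : ℝ) ^ (α - 1) :=
        Real.rpow_le_rpow_of_nonpos hq0 h4r (by linarith)
      have e2 : ((Y : ℝ) / 4) ^ (α - 1) = (Y : ℝ) ^ (α - 1) * 4 ^ (1 - α) := by
        rw [Real.div_rpow hY0.le (by norm_num), div_eq_mul_inv, ← Real.rpow_neg (by norm_num)]
        ring_nf
      have e3 : (2 : ℝ) ≤ 4 ^ (1 - α) := by
        have : (4 : ℝ) ^ (1 / 2 : ℝ) ≤ 4 ^ (1 - α) :=
          Real.rpow_le_rpow_of_exponent_le (by norm_num) (by linarith)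
        have h2 : (4 : ℝ) ^ (1 / 2 : ℝ) = 2 := by
          rw [show (4 : ℝ) = 2 ^ (2 : ℝ) by norm_num, ← Real.rpow_mul (by norm_num)]
          norm_num
        linarith
      have e4 : 0 ≤ (Y : ℝ) ^ (α - 1) := by positivity
      have e5 : 2 * (Y : ℝ) ^ (α - 1) ≤ (q : ℝ) ^ (α - 1) := by nlinarith
      nlinarith
    · rw [add_zero]
      apply mul_le_mul_of_nonneg_left _ hL
      exact Real.rpow_le_rpow_of_nonpos hq0 (by exact_mod_cast hq.2) (by linarith)
  refine le_trans ?_ (Finset.sum_le_sum hpt)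
  rw [← Finset.sum_mul, Finset.sum_add_distrib, ← Finset.sum_filter]
  have p1 : ∑ q ∈ Finset.Icc 1 Y, vonMangoldt q = Chebyshev.psi Y := by
    rw [Chebyshev.psi, Nat.floor_natCast]
    rfl
  have p2 : ∑ q ∈ (Finset.Icc 1 Y).filter (fun q => 4 * q ≤ Y), vonMangoldt q
      = Chebyshev.psi ((Y : ℝ) / 4) := by
    rw [Chebyshev.psi]
    apply Finset.sum_congr _ (fun _ _ => rfl)
    ext q
    have : ⌊(Y : ℝ) / 4⌋₊ = Y / 4 := by
      have := Nat.floor_div_natCast (K := ℝ) (Y : ℝ) 4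
      simpa using this
    rw [this]
    simp only [Finset.mem_filter, Finset.mem_Icc, Finset.mem_Ioc]
    omega
  rw [p1, p2]
  have hs : (Y : ℝ) ^ α = Y * (Y : ℝ) ^ (α - 1) := by
    rw [Real.rpow_sub_one hY0.ne']; field_simp
  rw [hs, ← mul_assoc]
  exact mul_le_mul_of_nonneg_right (aux_psi Y hYr) (by positivity)

open ArithmeticFunction in
lemma aux_smooth (Y : ℕ) (hY : 256 ≤ Y) (α lam : ℝ) (hα0 : 0 ≤ α) (hα : α ≤ 1 / 2)
    (hlam : 0 < lam) (hle : lam ≤ 3 / 4 * (Y : ℝ) ^ α) (n : ℕ) (hn : 1 ≤ n)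
    (hlog : Real.log n ≤ lam) :
    1 / 2 * ((n : ℝ) + 1) ^ (1 - α) ≤ ((Nat.smoothNumbersUpTo n (Y + 1)).card : ℝ) := by
  induction n using Nat.strong_induction_on with
  | _ n ih =>
  have hn1 : (1 : ℝ) ≤ n := by exact_mod_cast hn
  by_cases hnY : n ≤ Y
  · have hc : n ≤ (Nat.smoothNumbersUpTo n (Y + 1)).card := by
      have : Finset.Icc 1 n ⊆ Nat.smoothNumbersUpTo n (Y + 1) := by
        intro k hk
        rw [Finset.mem_Icc] at hk
        rw [Nat.mem_smoothNumbersUpTo]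
        exact ⟨hk.2, Nat.mem_smoothNumbers_of_lt (by omega) (by omega)⟩
      simpa using Finset.card_le_card this
    have hc' : (n : ℝ) ≤ ((Nat.smoothNumbersUpTo n (Y + 1)).card : ℝ) := by exact_mod_cast hc
    have : ((n : ℝ) + 1) ^ (1 - α) ≤ ((n : ℝ) + 1) ^ (1 : ℝ) :=
      Real.rpow_le_rpow_of_exponent_le (by linarith) (by linarith)
    rw [Real.rpow_one] at this
    linarith
  · push Not at hnY
    have hrec := aux_rec Y n hn
    have hsum := aux_sum Y hY α hα
    set c := ((Nat.smoothNumbersUpTo n (Y + 1)).card : ℝ) with hc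
    have hT : 0 ≤ ((n : ℝ) + 1) ^ (1 - α) := by positivity
    have hlow : 1 / 2 * ((n : ℝ) + 1) ^ (1 - α) *
        ∑ q ∈ Finset.Icc 1 Y, vonMangoldt q * (q : ℝ) ^ (α - 1) ≤
        ∑ q ∈ Finset.Icc 1 Y,
          vonMangoldt q * ((Nat.smoothNumbersUpTo (n / q) (Y + 1)).card : ℝ) := by
      rw [Finset.mul_sum]
      apply Finset.sum_le_sum
      intro q hq
      rw [Finset.mem_Icc] at hq
      have hL : 0 ≤ vonMangoldt q := vonMangoldt_nonneg
      by_cases hq1 : q = 1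
      · subst hq1; simp
      have hq0 : (0 : ℝ) < q := by exact_mod_cast hq.1
      have hlt : n / q < n := Nat.div_lt_self (by omega) (by omega)
      have hge : 1 ≤ n / q := (Nat.one_le_div_iff (by omega)).2 (by omega)
      have hge' : (1 : ℝ) ≤ ((n / q : ℕ) : ℝ) := by exact_mod_cast hge
      have hlog' : Real.log ((n / q : ℕ) : ℝ) ≤ lam := by
        refine le_trans (Real.log_le_log (by linarith) ?_) hlog
        exact_mod_cast hlt.le
      have hi := ih (n / q) hlt hge hlog'
      have hfl : ((n : ℝ) + 1) / q ≤ ((n / q : ℕ) : ℝ) + 1 := by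
        rw [div_le_iff₀ hq0]
        have : n + 1 ≤ (n / q + 1) * q := by
          have := Nat.lt_div_mul_add (a := n) (b := q) (by omega)
          nlinarith
        exact_mod_cast this
      have h1 : (((n : ℝ) + 1) / q) ^ (1 - α) ≤ (((n / q : ℕ) : ℝ) + 1) ^ (1 - α) :=
        Real.rpow_le_rpow (by positivity) hfl (by linarith)
      have h2 : (((n : ℝ) + 1) / q) ^ (1 - α) = ((n : ℝ) + 1) ^ (1 - α) * (q : ℝ) ^ (α - 1) := by
        rw [Real.div_rpow (by positivity) hq0.le, div_eq_mul_inv, ← Real.rpow_neg hq0.le]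
        ring_nf
      calc 1 / 2 * ((n : ℝ) + 1) ^ (1 - α) * (vonMangoldt q * (q : ℝ) ^ (α - 1))
          = vonMangoldt q * (1 / 2 * (((n : ℝ) + 1) ^ (1 - α) * (q : ℝ) ^ (α - 1))) := by ring
        _ ≤ _ := by
          apply mul_le_mul_of_nonneg_left _ hL
          rw [← h2]
          linarith
    have hc0 : 0 ≤ c := by rw [hc]; positivity
    have e1 : 1 / 2 * ((n : ℝ) + 1) ^ (1 - α) * lam ≤ c * lam :=
      calc _ ≤ 1 / 2 * ((n : ℝ) + 1) ^ (1 - α) *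
            ∑ q ∈ Finset.Icc 1 Y, vonMangoldt q * (q : ℝ) ^ (α - 1) :=
            mul_le_mul_of_nonneg_left (hle.trans hsum) (by positivity)
        _ ≤ c * Real.log n := hlow.trans hrec
        _ ≤ c * lam := mul_le_mul_of_nonneg_left hlog hc0
    exact le_of_mul_le_mul_right e1 hlam

lemma aux_roots (N M Y : ℕ) (hN : 100 ≤ N) (hM : 0 < M)
    (h : ∀ a : ℕ, 1 ≤ a → a ≤ Y → Nat.Coprime a N ∧ a ^ M ≡ 1 [MOD N]) :
    (Nat.smoothNumbersUpTo (N.minFac - 1) (Y + 1)).card ≤ M := by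
  have hp : N.minFac.Prime := Nat.minFac_prime (by omega)
  set p := N.minFac with hpdef
  have : Fact p.Prime := ⟨hp⟩
  have hpN : p ∣ N := Nat.minFac_dvd N
  have key : ∀ m : ℕ, m ∈ Nat.smoothNumbers (Y + 1) → (m : ZMod p) ^ M = 1 := by
    intro m
    induction m using Nat.recOnMul with
    | zero => intro hm; exact absurd rfl (Nat.ne_zero_of_mem_smoothNumbers hm)
    | one => simp
    | prime q hq =>
      intro hm
      have hqY : q < Y + 1 := Nat.mem_smoothNumbers'.1 hm q hq dvd_rfl
      have := (h q hq.one_le (by omega)).2.of_dvd hpN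
      have := (ZMod.natCast_eq_natCast_iff _ _ _).2 this
      simpa using this
    | mul a b ha hb =>
      intro hm
      rw [Nat.cast_mul, mul_pow, ha (Nat.mem_smoothNumbers_of_dvd hm (dvd_mul_right _ _)),
        hb (Nat.mem_smoothNumbers_of_dvd hm (dvd_mul_left _ _)), one_mul]
  have hle : (Nat.smoothNumbersUpTo (p - 1) (Y + 1)).card ≤
      (Polynomial.nthRoots M (1 : ZMod p)).toFinset.card := by
    apply Finset.card_le_card_of_injOn (fun m : ℕ => (m : ZMod p))
    · intro m hm
      rw [Finset.mem_coe, Nat.mem_smoothNumbersUpTo] at hm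
      simp only [Finset.mem_coe, Multiset.mem_toFinset, Polynomial.mem_nthRoots hM]
      exact key m hm.2
    · intro a ha b hb hab
      rw [Finset.mem_coe, Nat.mem_smoothNumbersUpTo] at ha hb
      have h0 := hp.pos
      have := (ZMod.natCast_eq_natCast_iff' _ _ _).1 hab
      rwa [Nat.mod_eq_of_lt (by omega), Nat.mod_eq_of_lt (by omega)] at this
  exact hle.trans ((Multiset.toFinset_card_le _).trans (Polynomial.card_nthRoots _ _))


set_option maxHeartbeats 2000000 in
/-- Let `N ≥ 100` be composite and `D` a positive integer with `D < N` and
`D > exp(√(2 · log N · log log N))`. Let `M` be a positive integer such that every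
integer `a` with `1 ≤ a ≤ ⌈√D⌉` is coprime to `N` and satisfies `a^M ≡ 1 (mod N)`.
Then the smallest prime divisor `p` of `N` satisfies `p ≤ M · √D`. -/
theorem minFac_le_M_mul_sqrt_D
    (N D M : ℕ) (hN : 100 ≤ N) (hcomp : ¬ N.Prime) (hDN : D < N) (hD1 : 1 ≤ D)
    (hM : 0 < M)
    (hD : Real.exp (Real.sqrt (2 * Real.log N * Real.log (Real.log N))) < D)
    (h : ∀ a : ℕ, 1 ≤ a → a ≤ ⌈Real.sqrt D⌉₊ → Nat.Coprime a N ∧ a ^ M ≡ 1 [MOD N]) :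
    (N.minFac : ℝ) ≤ M * Real.sqrt D := by
  have hp : N.minFac.Prime := Nat.minFac_prime (by omega)
  have hsq := Nat.minFac_sq_le_self (by omega) hcomp
  have hM' := aux_roots N M ⌈Real.sqrt D⌉₊ hN hM h
  have hpY : ⌈Real.sqrt D⌉₊ < N.minFac := by
    by_contra hcon
    push Not at hcon
    have := (h N.minFac hp.one_le hcon).1
    exact hp.one_lt.ne' (Nat.Coprime.eq_one_of_dvd this (Nat.minFac_dvd N))
  set p := N.minFac with hpdef
  set Y := ⌈Real.sqrt D⌉₊ with hYdef
  set z := Real.sqrt D with hz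
  have hD0 : (1 : ℝ) ≤ D := by exact_mod_cast hD1
  have hz0 : 0 < z := Real.sqrt_pos.2 (by linarith)
  have hzz : z * z = D := Real.mul_self_sqrt (by linarith)
  have hzY : z ≤ Y := Nat.le_ceil z
  have hp0 : (0 : ℝ) < p := by exact_mod_cast hp.pos
  have hp1 : (1 : ℝ) < p := by exact_mod_cast hp.one_lt
  have hM'r : ((Nat.smoothNumbersUpTo (p - 1) (Y + 1)).card : ℝ) ≤ M := by exact_mod_cast hM'
  have hNr : (100 : ℝ) ≤ N := by exact_mod_cast hN
  have hL4 : 4 ≤ Real.log N := by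
    rw [Real.le_log_iff_exp_le (by linarith)]
    have h1 := Real.exp_one_lt_d9
    have h2 : Real.exp 4 = Real.exp 1 ^ 4 := by rw [← Real.exp_nat_mul]; norm_num
    rw [h2]
    calc Real.exp 1 ^ 4 ≤ 2.7182818286 ^ 4 := by
          apply pow_le_pow_left₀ (Real.exp_pos 1).le h1.le
      _ ≤ 100 := by norm_num
      _ ≤ N := hNr
  have hlog4 : Real.log 4 = 2 * Real.log 2 := by
    rw [show (4 : ℝ) = 2 ^ 2 by norm_num, Real.log_pow]; norm_num
  have hl2 := Real.log_two_gt_d9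
  have hl2' := Real.log_two_lt_d9
  have hl1 : 1 ≤ Real.log (Real.log N) := by
    have := Real.log_le_log (by norm_num) hL4
    linarith
  set L := Real.log N with hLdef
  set l := Real.log L with hldef
  set w := Real.log z with hw
  set lam := Real.log p with hlamdef
  have hlam : 0 < lam := Real.log_pos hp1
  have hLl : 4 ≤ L * l := by nlinarith
  have hwD : 2 * w = Real.log D := by
    rw [← hzz, Real.log_mul hz0.ne' hz0.ne', hw]; ring
  have hwlow : Real.sqrt (2 * L * l) < 2 * w := by
    rw [hwD]
    exact (Real.lt_log_iff_exp_lt (by linarith)).2 hD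
  have hw0 : 0 < w := by
    have := Real.sqrt_nonneg (2 * L * l)
    linarith
  have hw2 : L * l ≤ 2 * w ^ 2 := by
    have h1 := Real.sq_sqrt (show 0 ≤ 2 * L * l by nlinarith)
    have h2 := Real.sqrt_nonneg (2 * L * l)
    nlinarith
  have hw1 : 1 ≤ w := by nlinarith
  have hlamL : 2 * lam ≤ L := by
    have : ((p : ℝ)) ^ 2 ≤ N := by exact_mod_cast hsq
    have h2 := Real.log_le_log (by positivity) this
    rw [Real.log_pow] at h2
    push_cast at h2
    exact h2
  by_cases hcase : lam ≤ 2 * w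
  · have hYc : Y ≤ (Nat.smoothNumbersUpTo (p - 1) (Y + 1)).card := by
      have : Finset.Icc 1 Y ⊆ Nat.smoothNumbersUpTo (p - 1) (Y + 1) := by
        intro k hk
        rw [Finset.mem_Icc] at hk
        rw [Nat.mem_smoothNumbersUpTo]
        exact ⟨by omega, Nat.mem_smoothNumbers_of_lt (by omega) (by omega)⟩
      simpa using Finset.card_le_card this
    have hYM : (Y : ℝ) ≤ M := by exact_mod_cast hYc.trans hM'
    have hpD : (p : ℝ) ≤ D := by
      rw [hwD] at hcase
      exact (Real.log_le_log_iff hp0 (by linarith)).1 hcase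
    nlinarith
  · push Not at hcase
    have hkey : lam * Real.log (2 * lam) ≤ w ^ 2 := by
      have h1 : Real.log (2 * lam) ≤ l := Real.log_le_log (by positivity) hlamL
      have h2 : lam * Real.log (2 * lam) ≤ lam * l := mul_le_mul_of_nonneg_left h1 hlam.le
      nlinarith
    have hboot : ∀ k : ℝ, 1 ≤ k → k ≤ w → 2 * Real.log (4 * k) ≤ w := by
      intro k hk hkw
      have h1 : Real.log (4 * k) ≤ Real.log (2 * lam) :=
        Real.log_le_log (by linarith) (by linarith)
      have h0 : 0 ≤ Real.log (4 * k) := Real.log_nonneg (by linarith)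
      have h2 : (2 * w) * Real.log (4 * k) ≤ w ^ 2 :=
        le_trans (mul_le_mul hcase.le h1 h0 hlam.le) hkey
      have h3 : w * (2 * Real.log (4 * k)) ≤ w * w := by linarith
      exact le_of_mul_le_mul_left h3 hw0
    have hb1 : 2 ≤ w := by
      have := hboot 1 le_rfl hw1
      rw [mul_one, hlog4] at this
      linarith
    have hb2 : 4 ≤ w := by
      have := hboot 2 (by norm_num) hb1
      rw [show (4 * 2 : ℝ) = 2 ^ 3 by norm_num, Real.log_pow] at this
      push_cast at this
      linarith
    have hz256 : 256 ≤ z := by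
      have := hboot 4 (by norm_num) hb2
      rw [show (4 * 4 : ℝ) = 2 ^ 4 by norm_num, Real.log_pow] at this
      push_cast at this
      have h8 : Real.log 256 ≤ w := by
        rw [show (256 : ℝ) = 2 ^ 8 by norm_num, Real.log_pow]
        push_cast
        linarith
      exact (Real.log_le_log_iff (by norm_num) hz0).1 h8
    have hY256 : 256 ≤ Y := by
      have : (256 : ℝ) ≤ Y := hz256.trans hzY
      exact_mod_cast this
    set α := (w - Real.log 2) / lam with hα
    have hα0 : 0 ≤ α := div_nonneg (by linarith) hlam.le
    have hα2 : α ≤ 1 / 2 := by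
      rw [hα, div_le_iff₀ hlam]; linarith
    have hαlam : α * lam = w - Real.log 2 := by rw [hα]; field_simp
    have hYα : lam ≤ 3 / 4 * (Y : ℝ) ^ α := by
      have h1 : z ^ α ≤ (Y : ℝ) ^ α := Real.rpow_le_rpow hz0.le hzY hα0
      have h2 : lam * (4 / 3) ≤ z ^ α := by
        rw [Real.rpow_def_of_pos hz0, ← hw]
        rw [← Real.log_le_iff_le_exp (by positivity)]
        have h3 : Real.log (2 * lam) - Real.log 2 / 2 ≤ w * α := by
          rw [hα, ← mul_div_assoc, le_div_iff₀ hlam]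
          nlinarith
        have h4 : Real.log (lam * (4 / 3)) ≤ Real.log (2 * lam) - Real.log 2 / 2 := by
          rw [Real.log_mul hlam.ne' (by norm_num), Real.log_mul (by norm_num) hlam.ne']
          have h5 : 2 * Real.log (4 / 3) ≤ Real.log 2 := by
            have : Real.log ((4 / 3 : ℝ) ^ 2) ≤ Real.log 2 :=
              Real.log_le_log (by norm_num) (by norm_num)
            rw [Real.log_pow] at this
            push_cast at this
            exact this
          linarith
        linarith
      linarith
    have hcast : ((p - 1 : ℕ) : ℝ) = (p : ℝ) - 1 := by
      rw [Nat.cast_sub hp.one_le]; simp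
    have hfin := aux_smooth Y hY256 α lam hα0 hα2 hlam hYα (p - 1) (by omega) (by
      apply Real.log_le_log
      · have : 0 < p - 1 := by omega
        exact_mod_cast this
      · rw [hcast]; linarith)
    rw [hcast, sub_add_cancel] at hfin
    have hval : (p : ℝ) ^ (1 - α) = p * (2 / z) := by
      rw [Real.rpow_sub hp0, Real.rpow_one, Real.rpow_def_of_pos hp0 α, ← hlamdef,
        mul_comm lam α, hαlam, Real.exp_sub, hw, Real.exp_log hz0, Real.exp_log (by norm_num)]
      field_simp
    rw [hval] at hfin
    have hfin2 : (p : ℝ) / z ≤ M := by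
      have : 1 / 2 * ((p : ℝ) * (2 / z)) = p / z := by ring
      linarith
    rwa [div_le_iff₀ hz0] at hfin2
end
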